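/- Let N ≥ 1, let δ be a real number, and let (μ_i)_{i≥0} be a real sequence. Define ν_i := μ_{i+1} + δ μ_i. Let τ_i := det(μ_{j+k})_{j,k=0}^{i−1}, τ'_i := det(μ_{j+k+1})_{j,k=0}^{i−1}, σ_i := det(ν_{j+k})_{j,k=0}^{i−1} (each equal to 1 when i = 0), and assume τ_i ≠ 0, τ'_i ≠ 0, σ_i ≠ 0 for i = 1,…,N. Define Q_i := τ_{i−1} τ'_i / (τ_i τ'_{i−1}), Q̄_i := τ_{i−1} σ_i / (τ_i σ_{i−1}) for 1 ≤ i ≤ N, and E_i := τ_{i+1} τ'_{i−1} / (τ_i τ'_i), Ē_i := τ_{i+1} σ_{i−1} / (τ_i σ_i) for 1 ≤ i ≤ N−1, with E_0 := 0 and Ē_0 := 0. Then: Q̄_i + Ē_{i−1} − δ = Q_i + E_{i−1} for i = 1,…,N, and Q̄_i Ē_i = Q_i E_i for i = 1,…,N−1. -/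

import Mathlib

open Finset

/-- Hankel determinant τ_i of a moment sequence. -/
noncomputable def hank (μ : ℕ → ℝ) (i : ℕ) : ℝ :=
  Matrix.det (Matrix.of fun j k : Fin i => μ (j.1 + k.1))

/-- The shifted moment sequence ν_i := μ_{i+1} + δ μ_i. -/
noncomputable def nuSeq (δ : ℝ) (μ : ℕ → ℝ) : ℕ → ℝ :=
  fun m => μ (m + 1) + δ * μ m

/-- Q_i := τ_{i−1} τ'_i / (τ_i τ'_{i−1}). -/
noncomputable def Qd (μ : ℕ → ℝ) (i : ℕ) : ℝ :=
  hank μ (i - 1) * hank (fun m => μ (m + 1)) i /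
    (hank μ i * hank (fun m => μ (m + 1)) (i - 1))

/-- E_i := τ_{i+1} τ'_{i−1} / (τ_i τ'_i), with E_0 = 0. -/
noncomputable def Ed (μ : ℕ → ℝ) (i : ℕ) : ℝ :=
  if i = 0 then 0 else
    hank μ (i + 1) * hank (fun m => μ (m + 1)) (i - 1) /
      (hank μ i * hank (fun m => μ (m + 1)) i)

/-- Q̄_i := τ_{i−1} σ_i / (τ_i σ_{i−1}). -/
noncomputable def Qbar (δ : ℝ) (μ : ℕ → ℝ) (i : ℕ) : ℝ :=
  hank μ (i - 1) * hank (nuSeq δ μ) i / (hank μ i * hank (nuSeq δ μ) (i - 1))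

/-- Ē_i := τ_{i+1} σ_{i−1} / (τ_i σ_i), with Ē_0 = 0. -/
noncomputable def Ebar (δ : ℝ) (μ : ℕ → ℝ) (i : ℕ) : ℝ :=
  if i = 0 then 0 else
    hank μ (i + 1) * hank (nuSeq δ μ) (i - 1) / (hank μ i * hank (nuSeq δ μ) i)

/-!
Let `P_n` be the orthogonal polynomials of the moment sequence `μ`, written as bordered Hankel
determinants. Every linear functional sends `P_n` to a determinant with the functional in its last
row: the moment functional gives orthogonality, evaluation at `-δ` gives `(-1) ^ n * σ_n`. Hence the
three-term recurrence of the `P_n`, evaluated at `-δ` and divided by `σ_{i-1}`, says that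
`Q̄_i + Ē_{i-1} - δ` is a recurrence coefficient, which depends on `μ` only. The unbarred
quantities are the case `δ = 0`. In the products `Q̄_i * Ē_i` the determinants `σ` cancel.
-/

open Polynomial

section HankelDeterminants

variable {R : Type*} [CommRing R]

/-- The Hankel matrix of order `n` of a moment sequence. -/
def hankelMatrix (μ : ℕ → R) (n : ℕ) : Matrix (Fin n) (Fin n) R :=
  Matrix.of fun j k => μ (j + k)

/-- The Hankel determinant `τ_n` over an arbitrary commutative ring; for real sequences it is
`hank`. -/
def hankelDet (μ : ℕ → R) (n : ℕ) : R :=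
  (hankelMatrix μ n).det

/-- The linear functional on polynomials whose moments are `μ`. -/
noncomputable def momentFunctional (μ : ℕ → R) : R[X] →ₗ[R] R :=
  (basisMonomials R).constr R μ

/-- The Christoffel transform of a moment sequence: the moments of `p ↦ L ((X + δ) * p)`, where `L`
has moments `μ`; for real sequences it is `nuSeq`. -/
def christoffel (δ : R) (μ : ℕ → R) (m : ℕ) : R :=
  μ (m + 1) + δ * μ m

/-- The first `n` rows of the Hankel matrix of order `n + 1`, completed by the last row `v`. -/
def borderedHankel (μ : ℕ → R) (n : ℕ) (v : Fin (n + 1) → R) :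
    Matrix (Fin (n + 1)) (Fin (n + 1)) R :=
  Matrix.of (Fin.snoc (fun j k => μ (j + k)) v)

/-- The `n`-th orthogonal polynomial of a moment sequence, normalised so that its coefficient at
`X ^ n` is `hankelDet μ n`; its degree drops below `n` if that determinant vanishes. -/
noncomputable def orthPoly (μ : ℕ → R) (n : ℕ) : R[X] :=
  (borderedHankel (fun m => C (μ m)) n fun k => X ^ (k : ℕ)).det

theorem christoffel_zero (μ : ℕ → R) : christoffel 0 μ = fun m => μ (m + 1) := by
  funext m
  rw [christoffel, zero_mul, add_zero]

theorem hankelDet_zero (μ : ℕ → R) : hankelDet μ 0 = 1 :=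
  Matrix.det_isEmpty

theorem hankelDet_one (μ : ℕ → R) : hankelDet μ 1 = μ 0 := by
  simp [hankelDet, hankelMatrix]

theorem hankelDet_ne_zero_of_pos [Nontrivial R] {μ : ℕ → R} {i : ℕ}
    (h : 1 ≤ i → hankelDet μ i ≠ 0) : hankelDet μ i ≠ 0 := by
  obtain rfl | hi := i.eq_zero_or_pos
  · rw [hankelDet_zero]
    exact one_ne_zero
  · exact h hi

theorem momentFunctional_X_pow (μ : ℕ → R) (k : ℕ) : momentFunctional μ (X ^ k) = μ k := by
  simpa only [momentFunctional, X_pow_eq_monomial, coe_basisMonomials] using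
    (basisMonomials R).constr_basis R μ k

theorem momentFunctional_X_pow_mul (μ : ℕ → R) (k : ℕ) (p : R[X]) :
    momentFunctional μ (X ^ k * p) = p.sum fun i a => μ (k + i) * a := by
  conv_lhs => rw [← p.sum_C_mul_X_pow_eq]
  simp only [Polynomial.sum, Finset.mul_sum, map_sum, ← smul_eq_C_mul, mul_smul_comm, ← pow_add,
    map_smul, momentFunctional_X_pow, smul_eq_mul]
  exact Finset.sum_congr rfl fun _ _ => mul_comm _ _

theorem hankelMatrix_mulVec_coeff (μ : ℕ → R) {n : ℕ} {p : R[X]} (hp : p.degree < n) (k : Fin n) :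
    (hankelMatrix μ n).mulVec (fun i => p.coeff i) k = momentFunctional μ (X ^ (k : ℕ) * p) := by
  rw [momentFunctional_X_pow_mul, ← sum_fin _ (by simp) hp]
  rfl

theorem det_borderedHankel (μ : ℕ → R) (n : ℕ) (v : Fin (n + 1) → R) :
    (borderedHankel μ n v).det = ∑ k : Fin (n + 1), (-1) ^ (n + k : ℕ) * v k *
      (Matrix.of fun j l : Fin n => μ (j + k.succAbove l)).det := by
  rw [Matrix.det_succ_row _ (Fin.last n)]
  refine Finset.sum_congr rfl fun k _ => ?_
  congr 2
  · simp [borderedHankel]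
  · ext j l
    simp [borderedHankel]

theorem map_orthPoly (μ : ℕ → R) (n : ℕ) (φ : R[X] →ₗ[R] R) :
    φ (orthPoly μ n) = (borderedHankel μ n fun k => φ (X ^ (k : ℕ))).det := by
  rw [orthPoly, det_borderedHankel, det_borderedHankel, map_sum]
  refine Finset.sum_congr rfl fun k _ => ?_
  set M : Matrix (Fin n) (Fin n) R := Matrix.of fun j l => μ (j + k.succAbove l)
  have hM : (Matrix.of fun j l : Fin n => C (μ (j + k.succAbove l))).det = C M.det :=
    (C.map_det M).symm
  have hterm : (-1) ^ (n + k : ℕ) * X ^ (k : ℕ) * C M.det =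
      ((-1) ^ (n + k : ℕ) * M.det) • (X : R[X]) ^ (k : ℕ) := by
    rw [smul_eq_C_mul]
    simp only [map_mul, map_pow, map_neg, map_one]
    ring
  rw [hM, hterm, map_smul, smul_eq_mul]
  ring

theorem coeff_orthPoly_of_lt (μ : ℕ → R) {n m : ℕ} (h : n < m) : (orthPoly μ n).coeff m = 0 := by
  rw [← lcoeff_apply, map_orthPoly]
  refine Matrix.det_eq_zero_of_row_eq_zero (Fin.last n) fun k => ?_
  have hk : m ≠ k := by omega
  simp [borderedHankel, coeff_X_pow, hk]

theorem coeff_orthPoly_self (μ : ℕ → R) (n : ℕ) : (orthPoly μ n).coeff n = hankelDet μ n := by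
  rw [← lcoeff_apply, map_orthPoly, det_borderedHankel, Finset.sum_eq_single (Fin.last n)]
  · simp [hankelDet, hankelMatrix, ← two_mul]
  · intro k _ hk
    have hk' : n ≠ k := fun h => hk (Fin.ext h.symm)
    simp [coeff_X_pow, hk']
  · simp

theorem momentFunctional_X_pow_mul_orthPoly (μ : ℕ → R) (m n : ℕ) :
    momentFunctional μ (X ^ m * orthPoly μ n) =
      (borderedHankel μ n fun k => μ (m + k)).det := by
  simpa [← pow_add, momentFunctional_X_pow] using
    map_orthPoly μ n (momentFunctional μ ∘ₗ LinearMap.mulLeft R (X ^ m))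

theorem momentFunctional_X_pow_mul_orthPoly_of_lt (μ : ℕ → R) {m n : ℕ} (h : m < n) :
    momentFunctional μ (X ^ m * orthPoly μ n) = 0 := by
  rw [momentFunctional_X_pow_mul_orthPoly]
  refine Matrix.det_zero_of_row_eq (Fin.castSucc_lt_last ⟨m, h⟩).ne (funext fun k => ?_)
  simp only [borderedHankel, Matrix.of_apply, Fin.snoc_castSucc, Fin.snoc_last]

theorem momentFunctional_X_pow_mul_orthPoly_self (μ : ℕ → R) (n : ℕ) :
    momentFunctional μ (X ^ n * orthPoly μ n) = hankelDet μ (n + 1) := by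
  rw [momentFunctional_X_pow_mul_orthPoly, hankelDet]
  congr 1
  ext j k
  induction j using Fin.lastCases <;> simp [borderedHankel, hankelMatrix]

theorem eval_neg_orthPoly (μ : ℕ → R) (n : ℕ) (δ : R) :
    (orthPoly μ n).eval (-δ) = (-1) ^ n * hankelDet (christoffel δ μ) n := by
  -- Adding `δ` times the preceding column to each column turns the border `(-δ) ^ k` into
  -- `(1, 0, …, 0)` and the moments `μ` into their Christoffel transform.
  let B : Matrix (Fin (n + 1)) (Fin (n + 1)) R := Matrix.of <|
    Fin.snoc (fun j => Fin.cons (μ j) fun k => christoffel δ μ (j + k)) (Pi.single 0 1)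
  have hcol : (borderedHankel μ n fun k => (-δ) ^ (k : ℕ)).det = B.det := by
    refine Matrix.det_eq_of_forall_col_eq_smul_add_pred (fun _ => -δ) ?_ fun j k => ?_
    · intro j
      induction j using Fin.lastCases <;> simp [B, borderedHankel]
    induction j using Fin.lastCases with
    | last => simp [B, borderedHankel, pow_succ']
    | cast i => simp [B, borderedHankel, christoffel, add_assoc]
  have hminor : B.submatrix (Fin.last n).succAbove (Fin.succAbove 0) =
      hankelMatrix (christoffel δ μ) n := by
    ext j k
    simp [B, hankelMatrix]
  rw [← leval_apply, map_orthPoly]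
  simp only [leval_apply, eval_pow, eval_X]
  rw [hcol, Matrix.det_succ_row B (Fin.last n), Fin.sum_univ_succ, hminor]
  simp [B, hankelDet]

theorem eq_zero_of_momentFunctional_eq_zero [IsDomain R] {μ : ℕ → R} {n : ℕ}
    (hτ : hankelDet μ n ≠ 0) {p : R[X]} (hdeg : p.degree < n)
    (horth : ∀ k < n, momentFunctional μ (X ^ k * p) = 0) : p = 0 := by
  have hcoeff : (fun i : Fin n => p.coeff i) = 0 :=
    Matrix.eq_zero_of_mulVec_eq_zero hτ <| funext fun k =>
      (hankelMatrix_mulVec_coeff μ hdeg k).trans (horth k k.isLt)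
  ext m
  obtain hm | hm := lt_or_ge m n
  · exact congrFun hcoeff ⟨m, hm⟩
  · exact (degree_lt_iff_coeff_zero p n).1 hdeg m hm

end HankelDeterminants

section QuotientDifference

variable {K : Type*} [Field K]

theorem eq_smul_orthPoly {μ : ℕ → K} {n : ℕ} (hτ : hankelDet μ n ≠ 0) {p : K[X]}
    (hdeg : p.degree ≤ n) (horth : ∀ k < n, momentFunctional μ (X ^ k * p) = 0) :
    p = (p.coeff n / hankelDet μ n) • orthPoly μ n := by
  rw [← sub_eq_zero]
  refine eq_zero_of_momentFunctional_eq_zero hτ ?_ fun k hk => ?_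
  · refine (degree_lt_iff_coeff_zero _ _).2 fun m hm => ?_
    rw [coeff_sub, coeff_smul, smul_eq_mul]
    obtain rfl | hm := hm.eq_or_lt
    · rw [coeff_orthPoly_self, div_mul_cancel₀ _ hτ, sub_self]
    · rw [coeff_orthPoly_of_lt μ hm, (degree_le_iff_coeff_zero p n).1 hdeg m (by exact_mod_cast hm),
        mul_zero, sub_zero]
  · rw [mul_sub, map_sub, mul_smul_comm, map_smul, horth k hk,
      momentFunctional_X_pow_mul_orthPoly_of_lt μ hk, smul_zero, sub_zero]

theorem exists_orthPoly_three_term {μ : ℕ → K} {n : ℕ} (hτ : hankelDet μ (n + 1) ≠ 0) :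
    ∃ a : K, (hankelDet μ (n + 1) * hankelDet μ (n + 2)) • (X * orthPoly μ (n + 1)) =
      hankelDet μ (n + 1) ^ 2 • orthPoly μ (n + 2) + a • orthPoly μ (n + 1) +
        hankelDet μ (n + 2) ^ 2 • orthPoly μ n := by
  set p : K[X] := (hankelDet μ (n + 1) * hankelDet μ (n + 2)) • (X * orthPoly μ (n + 1)) -
    hankelDet μ (n + 1) ^ 2 • orthPoly μ (n + 2) - hankelDet μ (n + 2) ^ 2 • orthPoly μ n with hp
  have hdeg : p.degree ≤ (n + 1 : ℕ) := by
    rw [degree_le_iff_coeff_zero]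
    intro m hm
    obtain ⟨l, rfl⟩ := Nat.exists_eq_add_of_lt (Nat.cast_lt.1 hm)
    rw [hp]
    simp only [coeff_sub, coeff_smul, coeff_X_mul, smul_eq_mul]
    rw [coeff_orthPoly_of_lt μ (show n < n + 1 + l + 1 by omega)]
    obtain rfl | hl := l.eq_zero_or_pos
    · simp only [add_zero, coeff_orthPoly_self]
      ring
    · rw [coeff_orthPoly_of_lt μ (show n + 1 < n + 1 + l by omega),
        coeff_orthPoly_of_lt μ (show n + 2 < n + 1 + l + 1 by omega)]
      ring
  have horth : ∀ k < n + 1, momentFunctional μ (X ^ k * p) = 0 := by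
    intro k hk
    rw [hp]
    simp only [mul_sub, map_sub, mul_smul_comm, map_smul, smul_eq_mul, ← mul_assoc, ← pow_succ]
    rw [momentFunctional_X_pow_mul_orthPoly_of_lt μ (show k < n + 2 by omega)]
    obtain rfl | hk := Nat.eq_or_lt_of_le (Nat.le_of_lt_succ hk)
    · simp only [momentFunctional_X_pow_mul_orthPoly_self]
      ring
    · rw [momentFunctional_X_pow_mul_orthPoly_of_lt μ (show k + 1 < n + 1 by omega),
        momentFunctional_X_pow_mul_orthPoly_of_lt μ hk]
      ring
  refine ⟨p.coeff (n + 1) / hankelDet μ (n + 1), ?_⟩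
  rw [← eq_smul_orthPoly hτ hdeg horth, hp]
  abel

theorem exists_hankelDet_christoffel_three_term {μ : ℕ → K} {n : ℕ}
    (hτ : hankelDet μ (n + 1) ≠ 0) :
    ∃ a : K, ∀ δ : K,
      hankelDet μ (n + 1) ^ 2 * hankelDet (christoffel δ μ) (n + 2) +
          hankelDet μ (n + 2) ^ 2 * hankelDet (christoffel δ μ) n =
        (a + δ * (hankelDet μ (n + 1) * hankelDet μ (n + 2))) *
          hankelDet (christoffel δ μ) (n + 1) := by
  obtain ⟨a, ha⟩ := exists_orthPoly_three_term hτ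
  refine ⟨a, fun δ => ?_⟩
  have heval := congrArg (eval (-δ)) ha
  simp only [eval_add, eval_smul, eval_mul, eval_X, eval_neg_orthPoly, smul_eq_mul] at heval
  have hsign : ((-1 : K) ^ n) ≠ 0 := by simp
  refine mul_left_cancel₀ hsign ?_
  linear_combination -heval

/-- The quantity `Q̄_i = τ_{i-1} σ_i / (τ_i σ_{i-1})` of the quotient-difference scheme with shift
`δ`; the unshifted `Q_i` is the case `δ = 0`. -/
def qdQ (δ : K) (μ : ℕ → K) (i : ℕ) : K :=
  hankelDet μ (i - 1) * hankelDet (christoffel δ μ) i /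
    (hankelDet μ i * hankelDet (christoffel δ μ) (i - 1))

/-- The quantity `Ē_i = τ_{i+1} σ_{i-1} / (τ_i σ_i)`, with `Ē_0 = 0`, of the quotient-difference
scheme with shift `δ`; the unshifted `E_i` is the case `δ = 0`. -/
def qdE (δ : K) (μ : ℕ → K) (i : ℕ) : K :=
  if i = 0 then 0 else
    hankelDet μ (i + 1) * hankelDet (christoffel δ μ) (i - 1) /
      (hankelDet μ i * hankelDet (christoffel δ μ) i)

theorem exists_qdQ_add_qdE_sub_eq {μ : ℕ → K} {n : ℕ} (hτ : hankelDet μ n ≠ 0)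
    (hτ_succ : hankelDet μ (n + 1) ≠ 0) :
    ∃ a : K, ∀ δ : K, hankelDet (christoffel δ μ) n ≠ 0 →
      qdQ δ μ (n + 1) + qdE δ μ n - δ = a := by
  cases n with
  | zero =>
    refine ⟨μ 1 / μ 0, fun δ _ => ?_⟩
    rw [zero_add, hankelDet_one] at hτ_succ
    simp only [qdQ, qdE, christoffel, zero_add, Nat.sub_self, hankelDet_zero, hankelDet_one,
      if_true]
    field_simp
    ring
  | succ n =>
    obtain ⟨a, ha⟩ := exists_hankelDet_christoffel_three_term hτ
    refine ⟨a / (hankelDet μ (n + 1) * hankelDet μ (n + 2)), fun δ hσ => ?_⟩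
    simp only [qdQ, qdE, Nat.add_sub_cancel, if_neg n.succ_ne_zero]
    field_simp
    linear_combination ha δ

theorem qdQ_mul_qdE {δ : K} {μ : ℕ → K} {i : ℕ} (hi : i ≠ 0)
    (hσ : hankelDet (christoffel δ μ) i ≠ 0) (hσ_pred : hankelDet (christoffel δ μ) (i - 1) ≠ 0) :
    qdQ δ μ i * qdE δ μ i = hankelDet μ (i - 1) * hankelDet μ (i + 1) / hankelDet μ i ^ 2 := by
  rw [qdQ, qdE, if_neg hi]
  field_simp

theorem stmt7_general (N : ℕ) (δ ε : K) (μ : ℕ → K)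
    (hτ : ∀ i, 1 ≤ i → i ≤ N → hankelDet μ i ≠ 0)
    (hδ : ∀ i, 1 ≤ i → i < N → hankelDet (christoffel δ μ) i ≠ 0)
    (hε : ∀ i, 1 ≤ i → i < N → hankelDet (christoffel ε μ) i ≠ 0) :
    (∀ i, 1 ≤ i → i ≤ N →
      qdQ δ μ i + qdE δ μ (i - 1) - δ = qdQ ε μ i + qdE ε μ (i - 1) - ε) ∧
    (∀ i, 1 ≤ i → i ≤ N - 1 → qdQ δ μ i * qdE δ μ i = qdQ ε μ i * qdE ε μ i) := by
  have hτ₀ {i} (hi : i ≤ N) := hankelDet_ne_zero_of_pos fun h => hτ i h hi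
  have hδ₀ {i} (hi : i < N) := hankelDet_ne_zero_of_pos fun h => hδ i h hi
  have hε₀ {i} (hi : i < N) := hankelDet_ne_zero_of_pos fun h => hε i h hi
  refine ⟨fun i hi hiN => ?_, fun i hi hiN => ?_⟩
  · obtain ⟨n, rfl⟩ := Nat.exists_eq_add_of_le' hi
    obtain ⟨a, ha⟩ := exists_qdQ_add_qdE_sub_eq (hτ₀ (Nat.le_of_succ_le hiN)) (hτ₀ hiN)
    exact (ha δ (hδ₀ hiN)).trans (ha ε (hε₀ hiN)).symm
  · have hi_ne : i ≠ 0 := by omega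
    rw [qdQ_mul_qdE hi_ne (hδ₀ (by omega)) (hδ₀ (by omega)),
      qdQ_mul_qdE hi_ne (hε₀ (by omega)) (hε₀ (by omega))]

end QuotientDifference

theorem qdQ_zero (μ : ℕ → ℝ) (i : ℕ) : qdQ 0 μ i = Qd μ i := by
  rw [qdQ, christoffel_zero]
  rfl

theorem qdE_zero (μ : ℕ → ℝ) (i : ℕ) : qdE 0 μ i = Ed μ i := by
  rw [qdE, christoffel_zero]
  rfl

theorem stmt7 (N : ℕ) (hN : 1 ≤ N) (δ : ℝ) (μ : ℕ → ℝ)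
    (hτ : ∀ i, 1 ≤ i → i ≤ N → hank μ i ≠ 0)
    (hτ' : ∀ i, 1 ≤ i → i ≤ N → hank (fun m => μ (m + 1)) i ≠ 0)
    (hσ : ∀ i, 1 ≤ i → i ≤ N → hank (nuSeq δ μ) i ≠ 0) :
    (∀ i, 1 ≤ i → i ≤ N →
      Qbar δ μ i + Ebar δ μ (i - 1) - δ = Qd μ i + Ed μ (i - 1)) ∧
    (∀ i, 1 ≤ i → i ≤ N - 1 →
      Qbar δ μ i * Ebar δ μ i = Qd μ i * Ed μ i) := by
  have key := stmt7_general N δ 0 μ hτ (fun i h hi => hσ i h hi.le) fun i h hi =>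
    (christoffel_zero μ).symm ▸ hτ' i h hi.le
  simp only [qdQ_zero, qdE_zero, sub_zero] at key
  exact key
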